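/- Let P be a bounded finite poset with |P| ≥ 2, and let 𝒬 be the collection of subposets Q ⊆ P containing both min(P) and max(P). Then c_⋆(P) ≤ max_{x ∈ [1/a(P), 1/2]} min{ H_2(x), min_{Q ∈ 𝒬} −(1/|Q|)·( 2x log x + (1−2x) log( (1−2x)/(a(Q)−2) ) ) }. -/

import Mathlib

open Classical in
/-- The finset of all antichains (including the empty antichain) of a finite poset `P`. -/
noncomputable def antichains (P : Type*) [Fintype P] [PartialOrder P] : Finset (Finset P) :=
  Finset.univ.filter (fun A => IsAntichain (· ≤ ·) (A : Set P))

/-- The upper shadow `∂_Q S` of an antichain `S` of `P` inside a subset `Q ⊆ P`. -/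
def upperShadow {P : Type*} [PartialOrder P] (Q : Set P) (S : Set P) : Set P :=
  {y | y ∈ Q ∧ (∃ x ∈ S, x ≤ y) ∧ ∀ z ∈ Q, z < y → ∀ x ∈ S, ¬ x ≤ z}

open Classical in
/-- The antichains of the subposet `Q ⊆ P`, i.e. antichains of `P` contained in `Q`. -/
noncomputable def antichainsIn {P : Type*} [Fintype P] [PartialOrder P] (Q : Set P) :
    Finset (Finset P) :=
  (antichains P).filter (fun A => (A : Set P) ⊆ Q)

/-- A weighting `α ∈ Δ_{a(P)}`: a nonnegative function on the antichains of `P`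
(extended by `0` off the antichains) summing to `1`. -/
def IsWeighting {P : Type*} [Fintype P] [PartialOrder P] (α : Finset P → ℝ) : Prop :=
  (∀ A ∈ antichains P, 0 ≤ α A) ∧ (∀ A ∉ antichains P, α A = 0) ∧
    ∑ A ∈ antichains P, α A = 1

open Classical in
/-- The shadow weighting `∂_Q(α)`: the coordinate of `∂_Q(α)` at an antichain `T` of `Q`
is the sum of `α` over all antichains of `P` whose upper shadow in `Q` is `T`. -/
noncomputable def shadowWeight {P : Type*} [Fintype P] [PartialOrder P]
    (α : Finset P → ℝ) (Q : Set P) (T : Finset P) : ℝ :=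
  ∑ A ∈ (antichains P).filter (fun B : Finset P => upperShadow Q (B : Set P) = (T : Set P)), α A

/-- The critical exponent `c_{α,P}(Q) = H_{a(Q)}(∂_Q(α)) / |Q|` of a subposet `Q` of `P`
with respect to a weighting `α` (natural logarithm; `0 log 0 = 0`). -/
noncomputable def critExp {P : Type*} [Fintype P] [PartialOrder P]
    (α : Finset P → ℝ) (Q : Set P) : ℝ :=
  (∑ T ∈ antichainsIn Q, -(shadowWeight α Q T * Real.log (shadowWeight α Q T))) /
    (Q.ncard : ℝ)

/-- The critical exponent `c_⋆(P) = max_{α ∈ Δ_{a(P)}} min_{∅ ≠ Q ⊆ P} c_{α,P}(Q)`,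
expressed as `sup {c ≥ 0 : ∃ α ∈ Δ_{a(P)}, ∀ ∅ ≠ Q ⊆ P, c ≤ c_{α,P}(Q)}`. -/
noncomputable def critStar (P : Type*) [Fintype P] [PartialOrder P] : ℝ :=
  sSup {c : ℝ | 0 ≤ c ∧ ∃ α : Finset P → ℝ, IsWeighting α ∧
    ∀ Q : Set P, Q.Nonempty → c ≤ critExp α Q}

/-- The binary entropy function `H₂(x) = -x log x - (1-x) log (1-x)` (natural log). -/
noncomputable def H₂ (x : ℝ) : ℝ := -(x * Real.log x) - (1 - x) * Real.log (1 - x)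

/-!
Let `α` be a weighting with `c ≤ c_{α,P}(Q)` for all nonempty `Q`. If `Q` contains `max P`, only the
empty antichain has empty shadow in `Q`; if `Q` contains `min P`, only `{min P}` has shadow
`{min P}`. So the weights `p = α ∅` and `q = α {min P}` survive in every `∂_Q α` with `Q ∈ 𝒬`, and
the singletons `{max P}`, `{min P}` give `c ≤ H₂ p` and `c ≤ H₂ q`. By concavity `c ≤ H₂ x` for
`x = (p + q) / 2`, and each `H (∂_Q α)` only grows when `p, q` are replaced by `x, x` and the other
`a(Q) - 2` weights by their mean. The resulting entropy is concave in `x` and maximal for the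
uniform distribution, `x = 1 / a(Q) ≥ 1 / a(P)`. So if `x < 1 / a(P)`, all the bounds increase when
`x` is moved up to `1 / a(P)`.
-/

open Real Set

section Concavity

variable {𝕜 : Type*} [Field 𝕜] [LinearOrder 𝕜] [IsStrictOrderedRing 𝕜]

lemma sum_le_card_mul_of_concaveOn {E ι : Type*} [AddCommGroup E] [Module 𝕜 E] {s : Set E}
    {f : E → 𝕜} (hf : ConcaveOn 𝕜 s f) {t : Finset ι} {p : ι → E} (hp : ∀ i ∈ t, p i ∈ s) :
    ∑ i ∈ t, f (p i) ≤ t.card * f ((t.card : 𝕜)⁻¹ • ∑ i ∈ t, p i) := by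
  rcases t.eq_empty_or_nonempty with rfl | ht
  · simp
  have hcard : (0 : 𝕜) < t.card := by exact_mod_cast ht.card_pos
  have jensen := hf.le_map_sum (w := fun _ => (t.card : 𝕜)⁻¹)
    (fun _ _ => inv_nonneg.2 hcard.le) (by simp [hcard.ne']) hp
  rw [← Finset.smul_sum, ← Finset.smul_sum, smul_eq_mul] at jensen
  rwa [← inv_mul_le_iff₀ hcard]

lemma monotoneOn_inter_Iic_of_concaveOn {s : Set 𝕜} {f : 𝕜 → 𝕜} {b : 𝕜} (hf : ConcaveOn 𝕜 s f)
    (hb : b ∈ s) (hmax : IsMaxOn f s b) : MonotoneOn f (s ∩ Iic b) := by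
  intro x hx y hy hxy
  have hmin : min (f x) (f b) ≤ f y := hf.min_le_of_mem_Icc hx.1 hb ⟨hxy, hy.2⟩
  rwa [min_eq_left (isMaxOn_iff.1 hmax x hx.1)] at hmin

end Concavity

section PairEntropy

/-- The entropy of the probability vector with two coordinates equal to `x` and `n` coordinates
equal to `(1 - 2 * x) / n`. It bounds the entropy of shadow weightings; `n` is a real number, to be
taken as `a(Q) - 2`. -/
noncomputable def pairEntropy (n x : ℝ) : ℝ :=
  2 * negMulLog x + n * negMulLog ((1 - 2 * x) / n)

variable {n x : ℝ}

lemma pairEntropy_eq_neg (hn : n ≠ 0) :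
    pairEntropy n x = -(2 * x * log x + (1 - 2 * x) * log ((1 - 2 * x) / n)) := by
  simp only [pairEntropy, negMulLog]
  field_simp
  ring

lemma pairEntropy_nonneg (hn : 1 ≤ n) (hx : x ∈ Icc 0 (1 / 2)) : 0 ≤ pairEntropy n x := by
  obtain ⟨hx₀, hx₁⟩ := hx
  have hrest : (1 - 2 * x) / n ≤ 1 := div_le_one_of_le₀ (by linarith) (by linarith)
  have h₁ := negMulLog_nonneg hx₀ (by linarith)
  have h₂ := negMulLog_nonneg (div_nonneg (by linarith) (by linarith)) hrest
  unfold pairEntropy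
  positivity

lemma concaveOn_pairEntropy (hn : 0 ≤ n) : ConcaveOn ℝ (Icc 0 (1 / 2)) (pairEntropy n) := by
  have hpair : ConcaveOn ℝ (Icc 0 (1 / 2)) negMulLog :=
    concaveOn_negMulLog.subset Icc_subset_Ici_self (convex_Icc _ _)
  have hline (y : ℝ) : AffineMap.lineMap (1 / n) (-1 / n) y = (1 - 2 * y) / n := by
    rw [AffineMap.lineMap_apply_ring']
    ring
  have hrest : ConcaveOn ℝ (Icc 0 (1 / 2)) fun y => negMulLog ((1 - 2 * y) / n) := by
    refine ((concaveOn_negMulLog.comp_affineMap (AffineMap.lineMap (1 / n) (-1 / n))).subset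
      (fun y hy => ?_) (convex_Icc _ _)).congr fun y _ => congrArg negMulLog (hline y)
    rw [mem_preimage, hline]
    exact div_nonneg (by linarith [hy.2]) hn
  exact (hpair.smul zero_le_two).add (hrest.smul hn)

lemma pairEntropy_one_div (hn : 0 < n) : pairEntropy n (1 / (n + 2)) = log (n + 2) := by
  have hrest : (1 - 2 * (1 / (n + 2))) / n = 1 / (n + 2) := by
    field_simp
    ring
  rw [pairEntropy, hrest, ← add_mul, negMulLog, one_div, log_inv]
  field_simp
  ring

lemma pairEntropy_le_log (hn : 0 < n) (hx : x ∈ Icc 0 (1 / 2)) :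
    pairEntropy n x ≤ log (n + 2) := by
  have hmean : 2 / (n + 2) * x + n / (n + 2) * ((1 - 2 * x) / n) = 1 / (n + 2) := by
    field_simp
    ring
  have jensen := concaveOn_negMulLog.2 (mem_Ici.2 hx.1)
    (mem_Ici.2 (div_nonneg (by linarith [hx.2]) hn.le) : (1 - 2 * x) / n ∈ Ici 0)
    (show 0 ≤ 2 / (n + 2) by positivity) (show 0 ≤ n / (n + 2) by positivity) (by field_simp; ring)
  simp only [smul_eq_mul, hmean] at jensen
  calc pairEntropy n x
      = (n + 2) * (2 / (n + 2) * negMulLog x + n / (n + 2) * negMulLog ((1 - 2 * x) / n)) := by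
        rw [pairEntropy]
        field_simp
    _ ≤ (n + 2) * negMulLog (1 / (n + 2)) := by gcongr
    _ = log (n + 2) := by
        rw [negMulLog, one_div, log_inv]
        field_simp

lemma monotoneOn_pairEntropy (hn : 0 < n) :
    MonotoneOn (pairEntropy n) (Icc 0 (1 / (n + 2))) := by
  have hle : 1 / (n + 2) ≤ 1 / 2 := one_div_le_one_div_of_le two_pos (by linarith)
  have hmax : IsMaxOn (pairEntropy n) (Icc 0 (1 / 2)) (1 / (n + 2)) := fun x hx =>
    (pairEntropy_le_log hn hx).trans_eq (pairEntropy_one_div hn).symm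
  exact (monotoneOn_inter_Iic_of_concaveOn (concaveOn_pairEntropy hn.le)
    ⟨by positivity, hle⟩ hmax).mono fun x hx => ⟨⟨hx.1, hx.2.trans hle⟩, hx.2⟩

lemma sum_negMulLog_le_pairEntropy {ι : Type*} {s : Finset ι} {p : ι → ℝ} {i j : ι}
    (hi : i ∈ s) (hj : j ∈ s) (hij : i ≠ j) (hp : ∀ k ∈ s, 0 ≤ p k) (hsum : ∑ k ∈ s, p k = 1) :
    ∑ k ∈ s, negMulLog (p k) ≤ pairEntropy (s.card - 2) ((p i + p j) / 2) := by
  classical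
  have hsub : {i, j} ⊆ s := by simp [Finset.insert_subset_iff, hi, hj]
  have split (f : ι → ℝ) : ∑ k ∈ s \ {i, j}, f k + (f i + f j) = ∑ k ∈ s, f k := by
    rw [← Finset.sum_sdiff hsub, Finset.sum_pair hij]
  have hcard : ((s \ {i, j}).card : ℝ) = s.card - 2 := by
    rw [Finset.cast_card_sdiff hsub, Finset.card_pair hij, Nat.cast_two]
  have hpair := sum_le_card_mul_of_concaveOn concaveOn_negMulLog fun k hk => hp k (hsub hk)
  have hrest := sum_le_card_mul_of_concaveOn concaveOn_negMulLog
    fun k hk => hp k (Finset.sdiff_subset (t := {i, j}) hk)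
  have hmass : ∑ k ∈ s \ {i, j}, p k = 1 - 2 * ((p i + p j) / 2) := by linarith [split p]
  rw [Finset.sum_pair hij, Finset.sum_pair hij, Finset.card_pair hij, smul_eq_mul,
    inv_mul_eq_div, Nat.cast_two] at hpair
  rw [hmass, hcard, smul_eq_mul, inv_mul_eq_div] at hrest
  rw [← split, pairEntropy]
  linarith

end PairEntropy

lemma H₂_eq_binEntropy : H₂ = binEntropy := by
  funext x
  rw [binEntropy_eq_negMulLog_add_negMulLog_one_sub, H₂, negMulLog, negMulLog]
  ring

section UpperShadow

variable {P : Type*} [PartialOrder P] {Q S : Set P}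

lemma upperShadow_eq_setOf_minimal :
    upperShadow Q S = {y | Minimal (· ∈ Q ∩ upperClosure S) y} := by
  ext y
  simp only [upperShadow, minimal_iff_forall_lt, mem_inter_iff, SetLike.mem_coe,
    mem_upperClosure, mem_ofPred_eq]
  grind

lemma upperShadow_subset : upperShadow Q S ⊆ Q := fun _ hy => hy.1

lemma isAntichain_upperShadow : IsAntichain (· ≤ ·) (upperShadow Q S) := by
  rw [upperShadow_eq_setOf_minimal]
  exact setOfPred_minimal_antichain _

lemma upperShadow_eq_empty_iff [WellFoundedLT P] (hQ : IsCofinal Q) :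
    upperShadow Q S = ∅ ↔ S = ∅ := by
  refine ⟨fun h => ?_, by rintro rfl; simp [upperShadow]⟩
  contrapose! h
  obtain ⟨x, hx⟩ := h
  obtain ⟨y, hy, hxy⟩ := hQ x
  rw [upperShadow_eq_setOf_minimal]
  exact exists_minimal_of_wellFoundedLT _ ⟨y, hy, x, hx, hxy⟩

lemma upperShadow_eq_singleton_bot_iff {bot : P} (hbot : IsBot bot) (hQ : bot ∈ Q)
    (hS : IsAntichain (· ≤ ·) S) : upperShadow Q S = {bot} ↔ S = {bot} := by
  constructor
  · intro h
    obtain ⟨-, ⟨x, hx, hxbot⟩, -⟩ : bot ∈ upperShadow Q S := h ▸ mem_singleton bot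
    obtain rfl : x = bot := hxbot.antisymm (hbot x)
    exact eq_singleton_iff_unique_mem.2 ⟨hx, fun y hy => (hS.eq hx hy (hbot y)).symm⟩
  · rintro rfl
    refine eq_singleton_iff_unique_mem.2
      ⟨⟨hQ, ⟨bot, rfl, le_rfl⟩, fun z _ hz => absurd (hbot z) hz.not_ge⟩, fun y hy => ?_⟩
    by_contra hne
    exact hy.2.2 bot hQ ((hbot y).lt_of_ne' hne) bot rfl le_rfl

end UpperShadow

section Antichains

variable {P : Type*} [Fintype P] [PartialOrder P]

lemma mem_antichains {A : Finset P} : A ∈ antichains P ↔ IsAntichain (· ≤ ·) (A : Set P) := by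
  simp [antichains]

lemma mem_antichainsIn {Q : Set P} {A : Finset P} :
    A ∈ antichainsIn Q ↔ IsAntichain (· ≤ ·) (A : Set P) ∧ (A : Set P) ⊆ Q := by
  simp [antichainsIn, mem_antichains]

lemma antichainsIn_subset_antichains (Q : Set P) : antichainsIn Q ⊆ antichains P :=
  fun _ hA => mem_antichains.2 (mem_antichainsIn.1 hA).1

lemma empty_mem_antichainsIn (Q : Set P) : ∅ ∈ antichainsIn Q := by
  simp [mem_antichainsIn]

lemma singleton_mem_antichainsIn {Q : Set P} {a : P} (ha : a ∈ Q) : {a} ∈ antichainsIn Q := by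
  simpa [mem_antichainsIn] using ha

lemma empty_mem_antichains : ∅ ∈ antichains P := by
  simp [mem_antichains]

lemma singleton_mem_antichains (a : P) : {a} ∈ antichains P := by
  simp [mem_antichains]

lemma antichainsIn_singleton [DecidableEq P] (a : P) : antichainsIn {a} = {∅, {a}} := by
  ext A
  simp only [mem_antichainsIn, Finset.coe_subset_singleton, Finset.subset_singleton_iff,
    Finset.mem_insert, Finset.mem_singleton, and_iff_right_iff_imp]
  rintro (rfl | rfl) <;> simp

lemma two_lt_card_antichainsIn {Q : Set P} {a b : P} (ha : a ∈ Q) (hb : b ∈ Q) (hab : a ≠ b) :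
    2 < (antichainsIn Q).card :=
  Finset.two_lt_card.2 ⟨∅, empty_mem_antichainsIn Q, {a}, singleton_mem_antichainsIn ha,
    {b}, singleton_mem_antichainsIn hb, (Finset.singleton_ne_empty a).symm,
    (Finset.singleton_ne_empty b).symm, Finset.singleton_injective.ne hab⟩

end Antichains

section ShadowWeight

variable {P : Type*} [Fintype P] [PartialOrder P] {α : Finset P → ℝ} {Q : Set P}

namespace IsWeighting

lemma mem_Icc (hα : IsWeighting α) {A : Finset P} (hA : A ∈ antichains P) : α A ∈ Icc 0 1 :=
  ⟨hα.1 A hA, hα.2.2 ▸ Finset.single_le_sum hα.1 hA⟩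

lemma add_le_one (hα : IsWeighting α) {A B : Finset P} (hA : A ∈ antichains P)
    (hB : B ∈ antichains P) (hAB : A ≠ B) : α A + α B ≤ 1 := by
  classical
  rw [← hα.2.2, ← Finset.sum_pair hAB]
  refine Finset.sum_le_sum_of_subset_of_nonneg ?_ fun C hC _ => hα.1 C hC
  simp [Finset.insert_subset_iff, hA, hB]

lemma shadowWeight_nonneg (hα : IsWeighting α) (Q : Set P) (T : Finset P) :
    0 ≤ shadowWeight α Q T :=
  Finset.sum_nonneg fun A hA => hα.1 A (Finset.mem_filter.1 hA).1

lemma sum_shadowWeight (hα : IsWeighting α) (Q : Set P) :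
    ∑ T ∈ antichainsIn Q, shadowWeight α Q T = 1 := by
  classical
  have hmaps : ∀ B ∈ antichains P, (upperShadow Q (B : Set P)).toFinset ∈ antichainsIn Q := by
    intro B _
    rw [mem_antichainsIn, coe_toFinset]
    exact ⟨isAntichain_upperShadow, upperShadow_subset⟩
  rw [← hα.2.2, ← Finset.sum_fiberwise_of_maps_to hmaps]
  simp only [shadowWeight, ← Finset.coe_inj, coe_toFinset]

end IsWeighting

lemma shadowWeight_eq_of_forall_iff {A T : Finset P} (hA : A ∈ antichains P)
    (h : ∀ B ∈ antichains P, upperShadow Q B = T ↔ B = A) : shadowWeight α Q T = α A := by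
  classical
  rw [shadowWeight, Finset.filter_congr h, Finset.filter_eq', if_pos hA, Finset.sum_singleton]

lemma shadowWeight_empty (α : Finset P → ℝ) (hQ : IsCofinal Q) : shadowWeight α Q ∅ = α ∅ := by
  refine shadowWeight_eq_of_forall_iff empty_mem_antichains fun B _ => ?_
  rw [Finset.coe_empty, upperShadow_eq_empty_iff hQ, Finset.coe_eq_empty]

lemma shadowWeight_singleton_bot (α : Finset P → ℝ) {bot : P} (hbot : IsBot bot) (hQ : bot ∈ Q) :
    shadowWeight α Q {bot} = α {bot} := by
  refine shadowWeight_eq_of_forall_iff (singleton_mem_antichains bot) fun B hB => ?_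
  rw [Finset.coe_singleton, upperShadow_eq_singleton_bot_iff hbot hQ (mem_antichains.1 hB),
    Finset.coe_eq_singleton]

end ShadowWeight

section CritExp

variable {P : Type*} [Fintype P] [PartialOrder P] {α : Finset P → ℝ} {Q : Set P}

lemma critExp_eq_sum_negMulLog :
    critExp α Q = (∑ T ∈ antichainsIn Q, negMulLog (shadowWeight α Q T)) / Q.ncard := by
  simp only [critExp, negMulLog_eq_neg]

namespace IsWeighting

lemma critExp_singleton (hα : IsWeighting α) {a : P} {T : Finset P} (hT : T ∈ antichainsIn {a}) :
    critExp α {a} = binEntropy (shadowWeight α {a} T) := by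
  classical
  have hne : (∅ : Finset P) ≠ {a} := (Finset.singleton_ne_empty a).symm
  have hsum := hα.sum_shadowWeight {a}
  rw [antichainsIn_singleton, Finset.sum_pair hne] at hsum
  have hcompl : shadowWeight α {a} {a} = 1 - shadowWeight α {a} ∅ := by linarith
  have hempty : critExp α {a} = binEntropy (shadowWeight α {a} ∅) := by
    rw [critExp_eq_sum_negMulLog, antichainsIn_singleton, Finset.sum_pair hne, hcompl,
      ncard_singleton, Nat.cast_one, div_one, binEntropy_eq_negMulLog_add_negMulLog_one_sub]
  rw [antichainsIn_singleton, Finset.mem_insert, Finset.mem_singleton] at hT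
  rcases hT with rfl | rfl
  · exact hempty
  · rw [hempty, hcompl, binEntropy_one_sub]

lemma critExp_le_pairEntropy (hα : IsWeighting α) {bot : P} (hbot : IsBot bot) (hbotQ : bot ∈ Q)
    (hQ : IsCofinal Q) :
    critExp α Q ≤ pairEntropy ((antichainsIn Q).card - 2) ((α ∅ + α {bot}) / 2) / Q.ncard := by
  rw [critExp_eq_sum_negMulLog, ← shadowWeight_empty α hQ,
    ← shadowWeight_singleton_bot α hbot hbotQ]
  gcongr
  exact sum_negMulLog_le_pairEntropy (empty_mem_antichainsIn Q)
    (singleton_mem_antichainsIn hbotQ) (Finset.singleton_ne_empty bot).symm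
    (fun T _ => hα.shadowWeight_nonneg Q T) (hα.sum_shadowWeight Q)

end IsWeighting

end CritExp

section EntropyBound

variable {P : Type*} [Fintype P] [PartialOrder P]

/-- The bound on `c_{α,P}(Q)`, for `Q` containing `min P` and `max P`, in terms of the mean `x` of
the weights of `∅` and `{min P}`. -/
noncomputable def subposetBound (Q : Set P) (x : ℝ) : ℝ :=
  -(1 / (Q.ncard : ℝ)) * (2 * x * log x +
    (1 - 2 * x) * log ((1 - 2 * x) / (((antichainsIn Q).card : ℝ) - 2)))

/-- The function of `x` whose maximum over `[1 / a(P), 1 / 2]` bounds `c_⋆(P)`. -/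
noncomputable def entropyBound (bot top : P) (x : ℝ) : ℝ :=
  min (H₂ x) (sInf {w : ℝ | ∃ Q : Set P, bot ∈ Q ∧ top ∈ Q ∧ w = subposetBound Q x})

variable {bot top : P} {c x : ℝ}

lemma one_le_card_antichainsIn_sub_two {Q : Set P} {a b : P} (ha : a ∈ Q) (hb : b ∈ Q)
    (hab : a ≠ b) : (1 : ℝ) ≤ (antichainsIn Q).card - 2 := by
  have : (3 : ℝ) ≤ (antichainsIn Q).card := by exact_mod_cast two_lt_card_antichainsIn ha hb hab
  linarith

lemma subposetBound_eq_pairEntropy {Q : Set P} {a b : P} (ha : a ∈ Q) (hb : b ∈ Q) (hab : a ≠ b) :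
    subposetBound Q x = pairEntropy ((antichainsIn Q).card - 2) x / Q.ncard := by
  have := one_le_card_antichainsIn_sub_two ha hb hab
  rw [subposetBound, pairEntropy_eq_neg (by linarith)]
  ring

lemma le_entropyBound_iff (hne : bot ≠ top) :
    c ≤ entropyBound bot top x ↔ c ≤ binEntropy x ∧ ∀ Q : Set P, bot ∈ Q → top ∈ Q →
      c ≤ pairEntropy ((antichainsIn Q).card - 2) x / Q.ncard := by
  have hbdd : BddBelow {w : ℝ | ∃ Q : Set P, bot ∈ Q ∧ top ∈ Q ∧ w = subposetBound Q x} := by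
    refine ((finite_range fun Q : Set P => subposetBound Q x).subset ?_).bddBelow
    rintro w ⟨Q, -, -, rfl⟩
    exact ⟨Q, rfl⟩
  rw [entropyBound, le_min_iff, H₂_eq_binEntropy,
    le_csInf_iff hbdd ⟨_, univ, mem_univ _, mem_univ _, rfl⟩]
  refine and_congr_right fun _ => ⟨fun h Q hb ht => ?_, ?_⟩
  · exact (h _ ⟨Q, hb, ht, rfl⟩).trans_eq (subposetBound_eq_pairEntropy hb ht hne)
  · rintro h _ ⟨Q, hb, ht, rfl⟩
    exact (h Q hb ht).trans_eq (subposetBound_eq_pairEntropy hb ht hne).symm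

lemma entropyBound_le_log_two (bot top : P) (x : ℝ) : entropyBound bot top x ≤ log 2 :=
  (min_le_left _ _).trans (H₂_eq_binEntropy ▸ binEntropy_le_log_two)

lemma entropyBound_nonneg (hne : bot ≠ top) (hx : x ∈ Icc 0 (1 / 2)) :
    0 ≤ entropyBound bot top x := by
  refine (le_entropyBound_iff hne).2
    ⟨binEntropy_nonneg hx.1 (by linarith [hx.2]), fun Q hb ht => ?_⟩
  exact div_nonneg (pairEntropy_nonneg (one_le_card_antichainsIn_sub_two hb ht hne) hx)
    (Nat.cast_nonneg _)

lemma one_div_card_antichains_le_half [Nontrivial P] : 1 / ((antichains P).card : ℝ) ≤ 1 / 2 := by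
  obtain ⟨a, b, hab⟩ := exists_pair_ne P
  refine one_div_le_one_div_of_le two_pos ?_
  exact_mod_cast (two_lt_card_antichainsIn (mem_univ a) (mem_univ b) hab).le.trans
    (Finset.card_le_card (antichainsIn_subset_antichains univ))

lemma monotoneOn_entropyBound (hne : bot ≠ top) :
    MonotoneOn (entropyBound bot top) (Icc 0 (1 / ((antichains P).card : ℝ))) := by
  intro x hx y hy hxy
  have : Nontrivial P := ⟨bot, top, hne⟩
  have hhalf : 1 / ((antichains P).card : ℝ) ≤ 2⁻¹ :=
    one_div_card_antichains_le_half.trans_eq (one_div 2)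
  obtain ⟨hbin, hpair⟩ := (le_entropyBound_iff hne).1 (le_refl (entropyBound bot top x))
  refine (le_entropyBound_iff hne).2 ⟨hbin.trans ?_, fun Q hb ht => (hpair Q hb ht).trans ?_⟩
  · exact binEntropy_strictMonoOn.monotoneOn ⟨hx.1, hx.2.trans hhalf⟩ ⟨hy.1, hy.2.trans hhalf⟩ hxy
  · have hn := one_le_card_antichainsIn_sub_two hb ht hne
    have hcard : ((antichainsIn Q).card : ℝ) ≤ (antichains P).card := by
      exact_mod_cast Finset.card_le_card (antichainsIn_subset_antichains Q)
    have hle : 1 / ((antichains P).card : ℝ) ≤ 1 / ((antichainsIn Q).card - 2 + 2) :=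
      one_div_le_one_div_of_le (by linarith) (by linarith)
    gcongr
    exact monotoneOn_pairEntropy (by linarith) ⟨hx.1, hx.2.trans hle⟩ ⟨hy.1, hy.2.trans hle⟩ hxy

namespace IsWeighting

variable {α : Finset P → ℝ}

lemma mean_mem_Icc (hα : IsWeighting α) (a : P) : (α ∅ + α {a}) / 2 ∈ Icc 0 (1 / 2) := by
  have hempty := hα.1 _ empty_mem_antichains
  have hsingle := hα.1 _ (singleton_mem_antichains a)
  have hle := hα.add_le_one empty_mem_antichains (singleton_mem_antichains a)
    (Finset.singleton_ne_empty a).symm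
  constructor <;> linarith

lemma le_binEntropy_mean (hα : IsWeighting α) (hbot : IsBot bot) (htop : IsTop top)
    (hc : ∀ Q : Set P, Q.Nonempty → c ≤ critExp α Q) :
    c ≤ binEntropy ((α ∅ + α {bot}) / 2) := by
  have hempty : c ≤ binEntropy (α ∅) := by
    rw [← shadowWeight_empty α (isCofinal_singleton_iff.2 htop),
      ← hα.critExp_singleton (empty_mem_antichainsIn _)]
    exact hc _ (singleton_nonempty top)
  have hsingle : c ≤ binEntropy (α {bot}) := by
    rw [← shadowWeight_singleton_bot α hbot (mem_singleton bot),
      ← hα.critExp_singleton (singleton_mem_antichainsIn (mem_singleton bot))]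
    exact hc _ (singleton_nonempty bot)
  have hmean := (strictConcave_binEntropy.concaveOn.convex_ge c)
    ⟨hα.mem_Icc empty_mem_antichains, hempty⟩
    ⟨hα.mem_Icc (singleton_mem_antichains bot), hsingle⟩
    one_half_pos.le one_half_pos.le (add_halves (1 : ℝ))
  rw [add_div, div_eq_inv_mul, div_eq_inv_mul, ← one_div]
  exact hmean.2

lemma le_entropyBound (hα : IsWeighting α) (hbot : IsBot bot) (htop : IsTop top)
    (hne : bot ≠ top) (hc : ∀ Q : Set P, Q.Nonempty → c ≤ critExp α Q) :
    c ≤ entropyBound bot top ((α ∅ + α {bot}) / 2) := by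
  refine (le_entropyBound_iff hne).2 ⟨hα.le_binEntropy_mean hbot htop hc, fun Q hb ht => ?_⟩
  exact (hc Q ⟨bot, hb⟩).trans
    (hα.critExp_le_pairEntropy hbot hb fun x => ⟨top, ht, htop x⟩)

end IsWeighting

lemma exists_entropyBound_ge (hne : bot ≠ top) (hx : x ∈ Icc 0 (1 / 2)) :
    ∃ y ∈ Icc (1 / ((antichains P).card : ℝ)) (1 / 2),
      entropyBound bot top x ≤ entropyBound bot top y := by
  have : Nontrivial P := ⟨bot, top, hne⟩
  rcases le_total (1 / ((antichains P).card : ℝ)) x with hle | hle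
  · exact ⟨x, ⟨hle, hx.2⟩, le_rfl⟩
  · exact ⟨_, ⟨le_rfl, one_div_card_antichains_le_half⟩,
      monotoneOn_entropyBound hne ⟨hx.1, hle⟩ ⟨by positivity, le_rfl⟩ hle⟩

end EntropyBound

lemma ne_of_isBot_of_isTop {P : Type*} [PartialOrder P] [Nontrivial P] {bot top : P}
    (hbot : IsBot bot) (htop : IsTop top) : bot ≠ top := by
  let : BoundedOrder P := { bot := bot, bot_le := hbot, top := top, le_top := htop }
  exact bot_ne_top

/-- Upper bound for `c_⋆(P)` for a bounded poset `P` with `|P| ≥ 2`: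
`c_⋆(P) ≤ max_{x ∈ [1/a(P), 1/2]} min { H₂(x),
  min_{Q ∈ 𝒬} -(1/|Q|) (2x log x + (1-2x) log ((1-2x)/(a(Q)-2))) }`,
where `𝒬` is the collection of subposets of `P` containing both the minimum and the
maximum element of `P`. -/
theorem stmt11 (P : Type) [Fintype P] [PartialOrder P]
    (hcard : 2 ≤ Fintype.card P)
    (bot top : P) (hbot : ∀ x, bot ≤ x) (htop : ∀ x, x ≤ top) :
    critStar P ≤
      sSup {v : ℝ | ∃ x ∈ Set.Icc (1 / ((antichains P).card : ℝ)) (1 / 2),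
        v = min (H₂ x)
          (sInf {w : ℝ | ∃ Q : Set P, bot ∈ Q ∧ top ∈ Q ∧
            w = -(1 / (Q.ncard : ℝ)) * (2 * x * Real.log x +
              (1 - 2 * x) * Real.log ((1 - 2 * x) / (((antichainsIn Q).card : ℝ) - 2)))})} := by
  have : Nontrivial P := Fintype.one_lt_card_iff_nontrivial.1 hcard
  have hne : bot ≠ top := ne_of_isBot_of_isTop hbot htop
  change critStar P ≤ sSup {v : ℝ | ∃ x ∈ Icc (1 / ((antichains P).card : ℝ)) (1 / 2),
    v = entropyBound bot top x}
  refine Real.sSup_le ?_ (Real.sSup_nonneg ?_)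
  · rintro c ⟨-, α, hα, hc⟩
    obtain ⟨y, hy, hxy⟩ := exists_entropyBound_ge hne (hα.mean_mem_Icc bot)
    refine ((hα.le_entropyBound hbot htop hne hc).trans hxy).trans
      (le_csSup ⟨log 2, ?_⟩ ⟨y, hy, rfl⟩)
    rintro v ⟨x, -, rfl⟩
    exact entropyBound_le_log_two bot top x
  · rintro v ⟨x, hx, rfl⟩
    exact entropyBound_nonneg hne ⟨le_trans (by positivity) hx.1, hx.2⟩
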